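/- For each a ∈ F with a ∉ {0, 1} there exists a □_q-module structure V(1,a) on F² in which, with respect to the standard basis, x_0 acts by the matrix [[q^{−1}, (q−q^{−1})a^{−1}],[0, q]], x_1 acts by [[q, q^{−1}−q],[0, q^{−1}]], x_2 acts by [[q, 0],[q−q^{−1}, q^{−1}]], and x_3 acts by [[q^{−1}, 0],[(q^{−1}−q)a, q]]. Each such V(1,a) is an irreducible □_q-module of type 1 and diameter 1, and every finite-dimensional irreducible □_q-module of type 1 and diameter 1 is isomorphic to V(1,a) for exactly one a ∈ F∖{0,1}. -/

import Mathlib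

/-!
Put `C = (x_0 - x_2)²`. In type 1 and diameter 1 every `x_i` satisfies `x_i² = (q + q⁻¹) x_i - 1`,
so `C` commutes with `x_0` and `x_2`. The `q`-Weyl relations identify the `q⁻¹`-eigenspace `U_i` of
`x_i` with the `q`-eigenspace of `x_{i+1}`; hence whatever commutes with `x_i` and `x_{i+2}`
preserves both eigenspaces of `x_{i+1}`, and `C` is central. By Schur's lemma `C` acts as a scalar,
written `(q - q⁻¹)² (1 - b)`. For `0 ≠ u ∈ U_0` the vector `z = (q - q⁻¹)⁻¹ (x_2 - q) u` lies in
`U_2`, `u + z` lies in `U_1` and `b u + z` lies in `U_3`. Irreducibility forces `b ≠ 0, 1`, and the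
pair `u, z` transforms like the standard basis of `V(1,b⁻¹)`. The parameter is recovered from the
scalar by which `C` acts.
-/

noncomputable section

open FreeAlgebra

variable (F : Type) [Field F]

/-- The defining relations of the algebra `□_q` (Terwilliger), on the free algebra
with generators `x_i`, `i ∈ ℤ/4ℤ`. -/
inductive BoxRel (q : F) : FreeAlgebra F (ZMod 4) → FreeAlgebra F (ZMod 4) → Prop
  | rel1 (i : ZMod 4) : BoxRel q
      (q • (ι F i * ι F (i + 1)) - q⁻¹ • (ι F (i + 1) * ι F i))
      ((q - q⁻¹) • (1 : FreeAlgebra F (ZMod 4)))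
  | rel2 (i : ZMod 4) : BoxRel q
      (ι F i ^ 3 * ι F (i + 2) +
        ((q ^ 3 - (q⁻¹) ^ 3) / (q - q⁻¹)) • (ι F i * ι F (i + 2) * ι F i ^ 2))
      (((q ^ 3 - (q⁻¹) ^ 3) / (q - q⁻¹)) • (ι F i ^ 2 * ι F (i + 2) * ι F i) +
        ι F (i + 2) * ι F i ^ 3)

/-- The algebra `□_q`, presented by generators and relations. -/
abbrev BoxQ (q : F) : Type := RingQuot (BoxRel F q)

/-- The generators `x_i` of `□_q`. -/
def bx (q : F) (i : ZMod 4) : BoxQ F q :=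
  RingQuot.mkAlgHom F (BoxRel F q) (ι F i)

/-- `f` acts semisimply: `V` is spanned by the eigenspaces of `f`. -/
def SemisimpleOn {V : Type} [AddCommGroup V] [Module F V] (f : Module.End F V) : Prop :=
  (⨆ θ : F, Module.End.eigenspace f θ) = ⊤

/-- The set of (distinct) eigenvalues of `f`. -/
def EigSet {V : Type} [AddCommGroup V] [Module F V] (f : Module.End F V) : Set F :=
  {θ : F | Module.End.eigenspace f θ ≠ ⊥}

/-- The representation `π` of `A` on `V` is irreducible. -/
def IsIrrep {A V : Type} [Ring A] [Algebra F A] [AddCommGroup V] [Module F V]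
    (π : A →ₐ[F] Module.End F V) : Prop :=
  Nontrivial V ∧ ∀ W : Submodule F V, (∀ a : A, ∀ v ∈ W, π a v ∈ W) → W = ⊥ ∨ W = ⊤

/-- Isomorphism of representations of `A`. -/
def RepIso {A V W : Type} [Ring A] [Algebra F A] [AddCommGroup V] [Module F V]
    [AddCommGroup W] [Module F W]
    (π : A →ₐ[F] Module.End F V) (π' : A →ₐ[F] Module.End F W) : Prop :=
  ∃ σ : V ≃ₗ[F] W, ∀ (a : A) (v : V), σ (π a v) = π' a (σ v)

/-- The `□_q`-module given by `π` has type `1` and diameter `d`: each generator `x_i`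
acts semisimply with set of distinct eigenvalues `{q^(d-2n) : 0 ≤ n ≤ d}`. -/
def Type1Diam (q : F) {V : Type} [AddCommGroup V] [Module F V]
    (π : BoxQ F q →ₐ[F] Module.End F V) (d : ℕ) : Prop :=
  ∀ i : ZMod 4, SemisimpleOn F (π (bx F q i)) ∧
    EigSet F (π (bx F q i)) =
      {θ : F | ∃ n : ℕ, n ≤ d ∧ θ = q ^ ((d : ℤ) - 2 * (n : ℤ))}

theorem sub_inv_ne_zero_of_even_of_pow_ne_one {K : Type*} [Field K] {q : K} {n : ℕ} (hq0 : q ≠ 0)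
    (hn : Even n) (hqn : q ^ n ≠ 1) : q - q⁻¹ ≠ 0 := by
  contrapose! hqn
  obtain ⟨k, rfl⟩ := hn
  have hsq : q * q = 1 := (mul_eq_one_iff_eq_inv₀ hq0).2 (sub_eq_zero.1 hqn)
  rw [← two_mul, pow_mul, sq, hsq, one_pow]

section Algebra

variable {R A : Type*} [CommRing R] [Ring A] [Algebra R A] {p r : R} {x y : A}

theorem commute_sub_sq_of_mul_self_eq (hx : x * x = p • x - r • 1) (hy : y * y = p • y - r • 1) :
    Commute x ((x - y) ^ 2) := by
  have hcomm : x * (x - y) ^ 2 - (x - y) ^ 2 * x =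
      y * (x * x) - x * x * y + (x * (y * y) - y * y * x) := by noncomm_ring
  rw [commute_iff_eq, ← sub_eq_zero, hcomm, hx, hy]
  simp only [mul_sub, sub_mul, mul_smul_comm, smul_mul_assoc, mul_one, one_mul]
  abel

theorem cubic_rel_of_mul_self_eq (hx : x * x = p • x - 1) (y : A) :
    x ^ 3 * y + (p ^ 2 - 1) • (x * y * x ^ 2) = (p ^ 2 - 1) • (x ^ 2 * y * x) + y * x ^ 3 := by
  have hx3 : x ^ 3 = (p ^ 2 - 1) • x - p • 1 := by
    rw [pow_succ, sq, hx, sub_mul, smul_mul_assoc, hx, one_mul]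
    module
  rw [hx3, sq x, hx]
  simp only [mul_sub, sub_mul, mul_smul_comm, smul_mul_assoc, mul_one, one_mul]
  module

end Algebra

section Quadratic

open Module.End

variable {F} {V : Type} [AddCommGroup V] [Module F V] {f : Module.End F V} {α β : F}

theorem sub_smul_mem_eigenspace (hf : f * f = (α + β) • f - (α * β) • 1) (v : V) :
    f v - β • v ∈ eigenspace f α := by
  have hv : f (f v) = (α + β) • f v - (α * β) • v := LinearMap.congr_fun hf v
  rw [mem_eigenspace_iff, map_sub, map_smul, hv]
  module

theorem eigenspace_sup_eigenspace_eq_top (hαβ : α ≠ β)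
    (hf : f * f = (α + β) • f - (α * β) • 1) : eigenspace f α ⊔ eigenspace f β = ⊤ := by
  refine Submodule.eq_top_iff'.2 fun v => ?_
  have hα := sub_smul_mem_eigenspace hf v
  have hβ := sub_smul_mem_eigenspace (add_comm α β ▸ mul_comm α β ▸ hf) v
  have hv : v = (α - β)⁻¹ • ((f v - β • v) - (f v - α • v)) := by
    rw [eq_inv_smul_iff₀ (sub_ne_zero.2 hαβ)]
    module
  rw [hv]
  exact Submodule.smul_mem _ _ (sub_mem (Submodule.mem_sup_left hα) (Submodule.mem_sup_right hβ))

theorem mul_self_eq_of_semisimpleOn (hf : SemisimpleOn F f) (hspec : EigSet F f ⊆ {α, β}) :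
    f * f = (α + β) • f - (α * β) • 1 := by
  ext v
  have hv : v ∈ ⨆ θ : F, eigenspace f θ := hf ▸ Submodule.mem_top
  change f (f v) = (α + β) • f v - (α * β) • v
  induction hv using Submodule.iSup_induction' with
  | mem θ v hv =>
    obtain rfl | hv0 := eq_or_ne v 0
    · simp
    have hθ : θ = α ∨ θ = β := hspec ((Submodule.ne_bot_iff _).2 ⟨v, hv, hv0⟩)
    rw [mem_eigenspace_iff] at hv
    rcases hθ with rfl | rfl <;> rw [hv, map_smul, hv] <;> module
  | zero => simp
  | add v w _ _ hv hw =>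
    rw [map_add, map_add, hv, hw]
    module

theorem mem_eigSet_of_ne_smul_one (hf : f * f = (α + β) • f - (α * β) • 1) (hβ : f ≠ β • 1) :
    α ∈ EigSet F f := by
  contrapose! hβ
  have hbot : eigenspace f α = ⊥ := not_not.1 hβ
  ext v
  have hv := sub_smul_mem_eigenspace hf v
  rw [hbot, Submodule.mem_bot] at hv
  exact sub_eq_zero.1 hv

theorem ne_smul_one_of_mem_eigSet (hαβ : α ≠ β) (hα : α ∈ EigSet F f) : f ≠ β • 1 := by
  rintro rfl
  obtain ⟨v, hv, hv0⟩ := (Submodule.ne_bot_iff _).1 hα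
  exact hαβ (smul_left_injective F hv0 (mem_eigenspace_iff.1 hv).symm)

theorem eigSet_subset_pair (hf : f * f = (α + β) • f - (α * β) • 1) : EigSet F f ⊆ {α, β} := by
  intro θ hθ
  obtain ⟨v, hv, hv0⟩ := (Submodule.ne_bot_iff _).1 hθ
  have hquad : f (f v) = (α + β) • f v - (α * β) • v := LinearMap.congr_fun hf v
  rw [mem_eigenspace_iff] at hv
  rw [hv, map_smul, hv] at hquad
  have hroot : ((θ - α) * (θ - β)) • v = 0 := by linear_combination (norm := module) hquad
  rcases mul_eq_zero.1 ((smul_eq_zero.1 hroot).resolve_right hv0) with h | h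
  · exact Or.inl (sub_eq_zero.1 h)
  · exact Or.inr (sub_eq_zero.1 h)

theorem semisimpleOn_and_eigSet_eq_pair_iff (hαβ : α ≠ β) :
    SemisimpleOn F f ∧ EigSet F f = {α, β} ↔
      f * f = (α + β) • f - (α * β) • 1 ∧ f ≠ α • 1 ∧ f ≠ β • 1 := by
  constructor
  · rintro ⟨hss, hspec⟩
    exact ⟨mul_self_eq_of_semisimpleOn hss hspec.subset,
      ne_smul_one_of_mem_eigSet hαβ.symm (hspec ▸ Or.inr rfl),
      ne_smul_one_of_mem_eigSet hαβ (hspec ▸ Or.inl rfl)⟩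
  · rintro ⟨hf, hα, hβ⟩
    refine ⟨top_unique ?_, (eigSet_subset_pair hf).antisymm ?_⟩
    · rw [← eigenspace_sup_eigenspace_eq_top hαβ hf]
      exact sup_le (le_iSup _ α) (le_iSup _ β)
    · rintro θ (rfl | rfl)
      · exact mem_eigSet_of_ne_smul_one hf hβ
      · exact mem_eigSet_of_ne_smul_one (add_comm α θ ▸ mul_comm α θ ▸ hf) hα

theorem commute_of_eigenspace_sup_eigenspace_eq_top {T : Module.End F V}
    (htop : eigenspace f α ⊔ eigenspace f β = ⊤) (hα : ∀ v ∈ eigenspace f α, T v ∈ eigenspace f α)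
    (hβ : ∀ v ∈ eigenspace f β, T v ∈ eigenspace f β) : Commute T f := by
  have hcomm : ∀ θ, (∀ v ∈ eigenspace f θ, T v ∈ eigenspace f θ) →
      eigenspace f θ ≤ LinearMap.eqLocus (T * f) (f * T) := by
    intro θ hθ v hv
    rw [LinearMap.mem_eqLocus, mul_apply, mul_apply, mem_eigenspace_iff.1 hv, map_smul,
      mem_eigenspace_iff.1 (hθ v hv)]
  exact LinearMap.eqLocus_eq_top.1 (top_unique (htop ▸ sup_le (hcomm α hα) (hcomm β hβ)))

/-- The relation is equivalent to `(x - q⁻³) (y - q) = (q⁻² y - q) (x - q⁻¹)`, so `y - q` maps the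
`q⁻¹`-eigenspace of `x` into its `q⁻³`-eigenspace. -/
theorem eigenspace_inv_le_eigenspace {q : F} (hq0 : q ≠ 0) {x y : Module.End F V}
    (hxy : q • (x * y) - q⁻¹ • (y * x) = (q - q⁻¹) • 1) (hx : eigenspace x (q⁻¹ ^ 3) = ⊥) :
    eigenspace x q⁻¹ ≤ eigenspace y q := by
  intro v hv
  rw [mem_eigenspace_iff] at hv
  have hrel : q • x (y v) - q⁻¹ • y (x v) = (q - q⁻¹) • v := LinearMap.congr_fun hxy v
  rw [hv, map_smul] at hrel
  have hmem : y v - q • v ∈ eigenspace x (q⁻¹ ^ 3) := by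
    refine mem_eigenspace_iff.2 (smul_right_injective V hq0 ?_)
    simp only [map_sub, map_smul, hv]
    linear_combination (norm := skip) hrel
    match_scalars <;> field_simp <;> ring
  rw [hx, Submodule.mem_bot] at hmem
  exact mem_eigenspace_iff.2 (sub_eq_zero.1 hmem)

theorem eigenspace_inv_eq_eigenspace {q : F} (hq0 : q ≠ 0) {x y : Module.End F V}
    (hxy : q • (x * y) - q⁻¹ • (y * x) = (q - q⁻¹) • 1) (hx : eigenspace x (q⁻¹ ^ 3) = ⊥)
    (hy : eigenspace y (q ^ 3) = ⊥) : eigenspace x q⁻¹ = eigenspace y q := by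
  refine (eigenspace_inv_le_eigenspace hq0 hxy hx).antisymm ?_
  have hyx : q⁻¹ • (y * x) - q⁻¹⁻¹ • (x * y) = (q⁻¹ - q⁻¹⁻¹) • 1 := by
    rw [inv_inv, ← neg_sub, hxy, ← neg_smul, neg_sub]
  simpa only [inv_inv] using
    eigenspace_inv_le_eigenspace (inv_ne_zero hq0) hyx (by rwa [inv_inv])

end Quadratic

section Representations

variable {F} {A V W : Type} [Ring A] [Algebra F A] [AddCommGroup V] [Module F V]
  [AddCommGroup W] [Module F W] {π : A →ₐ[F] Module.End F V} {π' : A →ₐ[F] Module.End F W}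

theorem IsIrrep.exists_eq_smul_one_of_commute [IsAlgClosed F] [FiniteDimensional F V]
    (hπ : IsIrrep F π) {T : Module.End F V} (hT : ∀ a, Commute T (π a)) : ∃ c : F, T = c • 1 := by
  have := hπ.1
  obtain ⟨c, hc⟩ := Module.End.exists_eigenvalue T
  have htop : Module.End.eigenspace T c = ⊤ :=
    (hπ.2 _ fun a v hv => Module.End.mapsTo_genEigenspace_of_comm (hT a) c 1 hv).resolve_left hc
  exact ⟨c, LinearMap.ext fun v => Module.End.mem_eigenspace_iff.1 (htop ▸ Submodule.mem_top)⟩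

theorem IsIrrep.repIso_of_ne_zero (hπ : IsIrrep F π) (hπ' : IsIrrep F π') {σ : V →ₗ[F] W}
    (hσ : ∀ a v, σ (π a v) = π' a (σ v)) (hσ0 : σ ≠ 0) : RepIso F π π' := by
  have hker : LinearMap.ker σ = ⊥ := by
    refine (hπ.2 _ fun a v hv => ?_).resolve_right fun h => hσ0 (LinearMap.ker_eq_top.1 h)
    rw [LinearMap.mem_ker] at hv ⊢
    rw [hσ, hv, map_zero]
  have hrange : LinearMap.range σ = ⊤ := by
    refine (hπ'.2 _ ?_).resolve_left fun h => hσ0 (LinearMap.range_eq_bot.1 h)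
    rintro a _ ⟨v, rfl⟩
    exact ⟨π a v, hσ a v⟩
  exact ⟨LinearEquiv.ofBijective σ ⟨LinearMap.ker_eq_bot.1 hker, LinearMap.range_eq_top.1 hrange⟩,
    hσ⟩

theorem RepIso.map_eq_smul_one (h : RepIso F π π') {a : A} {c : F} (ha : π a = c • 1) :
    π' a = c • 1 := by
  obtain ⟨σ, hσ⟩ := h
  ext w
  obtain ⟨v, rfl⟩ := σ.surjective w
  simp [← hσ, ha]

end Representations

section Generators

variable {F} {q : F} {V W : Type} [AddCommGroup V] [Module F V] [AddCommGroup W] [Module F W]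

theorem adjoin_range_bx : Algebra.adjoin F (Set.range (bx F q)) = ⊤ := by
  have hrange : Set.range (bx F q) = RingQuot.mkAlgHom F (BoxRel F q) '' Set.range (ι F) :=
    Set.range_comp _ _
  rw [hrange, ← AlgHom.map_adjoin, FreeAlgebra.adjoin_range_ι, Algebra.map_top,
    AlgHom.range_eq_top]
  exact RingQuot.mkAlgHom_surjective F _

theorem bx_mul_bx_add_one (i : ZMod 4) :
    q • (bx F q i * bx F q (i + 1)) - q⁻¹ • (bx F q (i + 1) * bx F q i) = (q - q⁻¹) • 1 := by
  have hrel := RingQuot.mkAlgHom_rel F (BoxRel.rel1 (q := q) i)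
  simp only [map_sub, map_smul, map_mul, map_one] at hrel
  exact hrel

theorem map_apply_mem_of_bx {π : BoxQ F q →ₐ[F] Module.End F V} {U : Submodule F V}
    (hU : ∀ i, ∀ v ∈ U, π (bx F q i) v ∈ U) (a : BoxQ F q) : ∀ v ∈ U, π a v ∈ U := by
  have ha : a ∈ Algebra.adjoin F (Set.range (bx F q)) := by
    simp only [adjoin_range_bx, Algebra.mem_top]
  induction ha using Algebra.adjoin_induction with
  | mem _ h =>
    obtain ⟨i, rfl⟩ := h
    exact hU i
  | algebraMap c =>
    intro v hv
    rw [AlgHom.commutes, Module.algebraMap_end_apply]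
    exact U.smul_mem c hv
  | add a b _ _ ha hb =>
    intro v hv
    rw [map_add]
    exact U.add_mem (ha v hv) (hb v hv)
  | mul a b _ _ ha hb =>
    intro v hv
    rw [map_mul]
    exact ha _ (hb v hv)

theorem intertwines_of_bx {π : BoxQ F q →ₐ[F] Module.End F V} {π' : BoxQ F q →ₐ[F] Module.End F W}
    {σ : V →ₗ[F] W} (hσ : ∀ i v, σ (π (bx F q i) v) = π' (bx F q i) (σ v)) (a : BoxQ F q) :
    ∀ v, σ (π a v) = π' a (σ v) := by
  have ha : a ∈ Algebra.adjoin F (Set.range (bx F q)) := by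
    simp only [adjoin_range_bx, Algebra.mem_top]
  induction ha using Algebra.adjoin_induction with
  | mem _ h =>
    obtain ⟨i, rfl⟩ := h
    exact hσ i
  | algebraMap c => simp [Module.algebraMap_end_apply]
  | add a b _ _ ha hb => simp [ha, hb]
  | mul a b _ _ ha hb => simp [ha, hb]

theorem exists_boxQ_algHom {A : Type*} [Ring A] [Algebra F A] (hs : q - q⁻¹ ≠ 0) {X : ZMod 4 → A}
    (hrel : ∀ i, q • (X i * X (i + 1)) - q⁻¹ • (X (i + 1) * X i) = (q - q⁻¹) • 1)
    (hquad : ∀ i, X i * X i = (q + q⁻¹) • X i - 1) :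
    ∃ φ : BoxQ F q →ₐ[F] A, ∀ i, φ (bx F q i) = X i := by
  have hq0 : q ≠ 0 := by rintro rfl; simp at hs
  have hthree : (q ^ 3 - (q ^ 3)⁻¹) / (q - q⁻¹) = (q + q⁻¹) ^ 2 - 1 := by
    rw [div_eq_iff hs]
    field_simp
    ring
  refine ⟨RingQuot.liftAlgHom F ⟨FreeAlgebra.lift F X, ?_⟩, fun i => ?_⟩
  · rintro _ _ (i | i)
    · simpa using hrel i
    · simpa [hthree] using cubic_rel_of_mul_self_eq (hquad i) (X (i + 2))
  · rw [bx, RingQuot.liftAlgHom_mkAlgHom_apply, FreeAlgebra.lift_ι_apply]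

end Generators

section TypeOneDiameterOne

open Module.End

variable {F} {q : F} {V : Type} [AddCommGroup V] [Module F V] {π : BoxQ F q →ₐ[F] Module.End F V}

theorem type1Diam_one_iff (hs : q - q⁻¹ ≠ 0) :
    Type1Diam F q π 1 ↔ ∀ i, π (bx F q i) * π (bx F q i) = (q + q⁻¹) • π (bx F q i) - 1 ∧
      π (bx F q i) ≠ q • 1 ∧ π (bx F q i) ≠ q⁻¹ • 1 := by
  have hq0 : q ≠ 0 := by rintro rfl; simp at hs
  have hspec : {θ : F | ∃ n : ℕ, n ≤ 1 ∧ θ = q ^ (((1 : ℕ) : ℤ) - 2 * (n : ℤ))} = {q, q⁻¹} := by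
    ext θ
    simp [Nat.le_one_iff_eq_zero_or_eq_one, or_and_right, exists_or]
  simp only [Type1Diam, hspec, semisimpleOn_and_eigSet_eq_pair_iff (sub_ne_zero.1 hs),
    mul_inv_cancel₀ hq0, one_smul]

/-- The subspace `U_i` of a `□_q`-module: the `q⁻¹`-eigenspace of `x_i`. In type 1 and diameter 1
it is also the `q`-eigenspace of `x_{i+1}`, so the module amounts to the four subspaces `U_i`. -/
def corner (π : BoxQ F q →ₐ[F] Module.End F V) (i : ZMod 4) : Submodule F V :=
  eigenspace (π (bx F q i)) q⁻¹

theorem mem_corner_iff {i : ZMod 4} {v : V} : v ∈ corner π i ↔ π (bx F q i) v = q⁻¹ • v :=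
  mem_eigenspace_iff

namespace Type1Diam

theorem mul_self_eq (hs : q - q⁻¹ ≠ 0) (hπ : Type1Diam F q π 1) (i : ZMod 4) :
    π (bx F q i) * π (bx F q i) = (q + q⁻¹) • π (bx F q i) - (q * q⁻¹) • 1 := by
  have hq0 : q ≠ 0 := by rintro rfl; simp at hs
  rw [mul_inv_cancel₀ hq0, one_smul]
  exact ((type1Diam_one_iff hs).1 hπ i).1

variable (hq0 : q ≠ 0) (hq4 : q ^ 4 ≠ 1) (hπ : Type1Diam F q π 1)
include hq0 hq4 hπ

theorem corner_eq (i : ZMod 4) : corner π i = eigenspace (π (bx F q (i + 1))) q := by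
  have hs := sub_inv_ne_zero_of_even_of_pow_ne_one hq0 (by decide) hq4
  have hbot : ∀ (j : ZMod 4) (θ : F), θ ≠ q → θ ≠ q⁻¹ → eigenspace (π (bx F q j)) θ = ⊥ := by
    intro j θ h h'
    by_contra hθ
    exact (eigSet_subset_pair (hπ.mul_self_eq hs j) hθ).elim h h'
  have hcube : q ^ 3 ≠ q := fun h => hq4 (by grind)
  have hcube_inv : q ^ 3 ≠ q⁻¹ := fun h => hq4 (by rw [pow_succ, h, inv_mul_cancel₀ hq0])
  have hrel := congrArg π (bx_mul_bx_add_one (F := F) (q := q) i)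
  simp only [map_sub, map_smul, map_mul, map_one] at hrel
  refine eigenspace_inv_eq_eigenspace hq0 hrel (hbot _ _ ?_ ?_) (hbot _ _ hcube hcube_inv)
  · rwa [inv_pow, ne_eq, inv_eq_iff_eq_inv]
  · rwa [inv_pow, ne_eq, inv_inj]

theorem mem_corner_iff_add_one {i : ZMod 4} {v : V} :
    v ∈ corner π i ↔ π (bx F q (i + 1)) v = q • v := by
  rw [hπ.corner_eq hq0 hq4, mem_eigenspace_iff]

theorem disjoint_corner_add_one (i : ZMod 4) : Disjoint (corner π i) (corner π (i + 1)) := by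
  have hs := sub_inv_ne_zero_of_even_of_pow_ne_one hq0 (by decide) hq4
  rw [hπ.corner_eq hq0 hq4]
  exact disjoint_genEigenspace _ (sub_ne_zero.1 hs) 1 1

theorem sub_smul_mem_corner (i : ZMod 4) (v : V) :
    π (bx F q i) v - q • v ∈ corner π i := by
  have hs := sub_inv_ne_zero_of_even_of_pow_ne_one hq0 (by decide) hq4
  exact sub_smul_mem_eigenspace
    (add_comm q q⁻¹ ▸ mul_comm q q⁻¹ ▸ hπ.mul_self_eq hs i) v

theorem sub_inv_smul_mem_corner (i : ZMod 4) (v : V) :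
    π (bx F q (i + 1)) v - q⁻¹ • v ∈ corner π i := by
  have hs := sub_inv_ne_zero_of_even_of_pow_ne_one hq0 (by decide) hq4
  rw [hπ.corner_eq hq0 hq4]
  exact sub_smul_mem_eigenspace (hπ.mul_self_eq hs (i + 1)) v

theorem corner_ne_bot (i : ZMod 4) : corner π i ≠ ⊥ := by
  have hs := sub_inv_ne_zero_of_even_of_pow_ne_one hq0 (by decide) hq4
  exact mem_eigSet_of_ne_smul_one (add_comm q q⁻¹ ▸ mul_comm q q⁻¹ ▸ hπ.mul_self_eq hs i)
    ((type1Diam_one_iff hs).1 hπ i).2.1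

/-- All generators act on `U_i ∩ U_{i+2}` as scalars, so it is a submodule. -/
theorem disjoint_corner_add_two (hirr : IsIrrep F π) (i : ZMod 4) :
    Disjoint (corner π i) (corner π (i + 2)) := by
  have hs := sub_inv_ne_zero_of_even_of_pow_ne_one hq0 (by decide) hq4
  have hscalar : ∀ j, ∃ c : F, ∀ v ∈ corner π i ⊓ corner π (i + 2), π (bx F q j) v = c • v := by
    intro j
    obtain rfl | rfl | rfl | rfl : j = i ∨ j = i + 1 ∨ j = i + 2 ∨ j = i + 2 + 1 := by
      revert i j; decide
    · exact ⟨q⁻¹, fun v hv => mem_corner_iff.1 hv.1⟩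
    · exact ⟨q, fun v hv => (hπ.mem_corner_iff_add_one hq0 hq4).1 hv.1⟩
    · exact ⟨q⁻¹, fun v hv => mem_corner_iff.1 hv.2⟩
    · exact ⟨q, fun v hv => (hπ.mem_corner_iff_add_one hq0 hq4).1 hv.2⟩
  refine disjoint_iff.2 ((hirr.2 _ (map_apply_mem_of_bx fun j v hv => ?_)).resolve_right ?_)
  · obtain ⟨c, hc⟩ := hscalar j
    exact hc v hv ▸ Submodule.smul_mem _ c hv
  · intro htop
    refine ((type1Diam_one_iff hs).1 hπ i).2.2 (LinearMap.ext fun v => mem_corner_iff.1 ?_)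
    exact (htop ▸ Submodule.mem_top : v ∈ corner π i ⊓ corner π (i + 2)).1

theorem commute_of_commute_adjacent {T : Module.End F V} {i : ZMod 4}
    (hT : Commute T (π (bx F q i))) (hT' : Commute T (π (bx F q (i + 2)))) :
    Commute T (π (bx F q (i + 1))) := by
  have hs := sub_inv_ne_zero_of_even_of_pow_ne_one hq0 (by decide) hq4
  have hnext : corner π (i + 1) = eigenspace (π (bx F q (i + 2))) q := by
    rw [hπ.corner_eq hq0 hq4, add_assoc, one_add_one_eq_two]
  refine commute_of_eigenspace_sup_eigenspace_eq_top
    (eigenspace_sup_eigenspace_eq_top (sub_ne_zero.1 hs) (hπ.mul_self_eq hs (i + 1))) ?_ ?_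
  · rw [← hπ.corner_eq hq0 hq4]
    exact mapsTo_genEigenspace_of_comm hT.symm q⁻¹ 1
  · change ∀ v ∈ corner π (i + 1), T v ∈ corner π (i + 1)
    rw [hnext]
    exact mapsTo_genEigenspace_of_comm hT'.symm q 1

theorem commute_sub_sq (a : BoxQ F q) : Commute ((π (bx F q 0) - π (bx F q 2)) ^ 2) (π a) := by
  have hs := sub_inv_ne_zero_of_even_of_pow_ne_one hq0 (by decide) hq4
  have h0 := (commute_sub_sq_of_mul_self_eq (hπ.mul_self_eq hs 0) (hπ.mul_self_eq hs 2)).symm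
  have h2 := (commute_sub_sq_of_mul_self_eq (hπ.mul_self_eq hs 2) (hπ.mul_self_eq hs 0)).symm
  rw [← neg_sub, neg_sq] at h2
  have hgen : ∀ i, Commute ((π (bx F q 0) - π (bx F q 2)) ^ 2) (π (bx F q i))
    | 0 => h0
    | 1 => hπ.commute_of_commute_adjacent hq0 hq4 (i := 0) h0 h2
    | 2 => h2
    | 3 => hπ.commute_of_commute_adjacent hq0 hq4 (i := 2) h2 h0
  exact LinearMap.ext (intertwines_of_bx (π := π) (π' := π)
    (σ := (π (bx F q 0) - π (bx F q 2)) ^ 2) (fun i v => LinearMap.congr_fun (hgen i) v) a)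

end Type1Diam

end TypeOneDiameterOne

section EvaluationModules

variable {F} {q a b : F}

/-- The matrices by which the generators of `□_q` act on the evaluation module `V(1,a)`. -/
def evalMatrix (q a : F) : ZMod 4 → Matrix (Fin 2) (Fin 2) F
  | 0 => !![q⁻¹, (q - q⁻¹) * a⁻¹; 0, q]
  | 1 => !![q, q⁻¹ - q; 0, q⁻¹]
  | 2 => !![q, 0; q - q⁻¹, q⁻¹]
  | 3 => !![q⁻¹, 0; (q⁻¹ - q) * a, q]

theorem toLin'_fin_two_apply (a b c d : F) (v : Fin 2 → F) :
    Matrix.toLin' !![a, b; c, d] v = ![a * v 0 + b * v 1, c * v 0 + d * v 1] := by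
  simp only [Matrix.toLin'_apply, Matrix.cons_mulVec, Matrix.vec2_dotProduct, Matrix.cons_val,
    Matrix.empty_mulVec]

theorem evalMatrix_mul_self (hq0 : q ≠ 0) (a : F) (i : ZMod 4) :
    evalMatrix q a i * evalMatrix q a i = (q + q⁻¹) • evalMatrix q a i - 1 := by
  obtain rfl | rfl | rfl | rfl : i = 0 ∨ i = 1 ∨ i = 2 ∨ i = 3 := by revert i; decide
  all_goals
    simp only [evalMatrix, Matrix.mul_fin_two, Matrix.one_fin_two, ← Matrix.ext_iff,
      Fin.forall_fin_two, Matrix.sub_apply, Matrix.smul_apply, smul_eq_mul, Matrix.of_apply,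
      Matrix.cons_val]
    grind

theorem evalMatrix_mul_evalMatrix_add_one (hq0 : q ≠ 0) (ha : a ≠ 0) (i : ZMod 4) :
    q • (evalMatrix q a i * evalMatrix q a (i + 1)) -
      q⁻¹ • (evalMatrix q a (i + 1) * evalMatrix q a i) = (q - q⁻¹) • 1 := by
  have hnext : (0 + 1 : ZMod 4) = 1 ∧ (1 + 1 : ZMod 4) = 2 ∧ (2 + 1 : ZMod 4) = 3 ∧
      (3 + 1 : ZMod 4) = 0 := by decide
  obtain ⟨h0, h1, h2, h3⟩ := hnext
  obtain rfl | rfl | rfl | rfl : i = 0 ∨ i = 1 ∨ i = 2 ∨ i = 3 := by revert i; decide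
  all_goals
    simp only [h0, h1, h2, h3, evalMatrix, Matrix.mul_fin_two, Matrix.one_fin_two,
      ← Matrix.ext_iff, Fin.forall_fin_two, Matrix.sub_apply, Matrix.smul_apply, smul_eq_mul,
      Matrix.of_apply, Matrix.cons_val]
    grind

/-- The representation `π` of `□_q` on `F²` is the evaluation module `V(1,a)`. -/
def IsEvalRep (a : F) (π : BoxQ F q →ₐ[F] Module.End F (Fin 2 → F)) : Prop :=
  ∀ i, π (bx F q i) = Matrix.toLin' (evalMatrix q a i)

variable {π : BoxQ F q →ₐ[F] Module.End F (Fin 2 → F)}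

theorem isEvalRep_iff : IsEvalRep a π ↔
    π (bx F q 0) = Matrix.toLin' !![q⁻¹, (q - q⁻¹) * a⁻¹; 0, q] ∧
    π (bx F q 1) = Matrix.toLin' !![q, q⁻¹ - q; 0, q⁻¹] ∧
    π (bx F q 2) = Matrix.toLin' !![q, 0; q - q⁻¹, q⁻¹] ∧
    π (bx F q 3) = Matrix.toLin' !![q⁻¹, 0; (q⁻¹ - q) * a, q] :=
  ⟨fun h => ⟨h 0, h 1, h 2, h 3⟩, fun ⟨h0, h1, h2, h3⟩ i => match i with
    | 0 => h0
    | 1 => h1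
    | 2 => h2
    | 3 => h3⟩

theorem exists_isEvalRep (hs : q - q⁻¹ ≠ 0) (ha : a ≠ 0) :
    ∃ π : BoxQ F q →ₐ[F] Module.End F (Fin 2 → F), IsEvalRep a π := by
  have hq0 : q ≠ 0 := by rintro rfl; simp at hs
  obtain ⟨φ, hφ⟩ := exists_boxQ_algHom hs (evalMatrix_mul_evalMatrix_add_one hq0 ha)
    (evalMatrix_mul_self hq0 a)
  exact ⟨(Matrix.toLinAlgEquiv' : _ ≃ₐ[F] Module.End F (Fin 2 → F)).toAlgHom.comp φ,
    fun i => congrArg Matrix.toLin' (hφ i)⟩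

theorem evalMatrix_ne_smul_one (hs : q - q⁻¹ ≠ 0) (ha : a ≠ 0) (i : ZMod 4) (c : F) :
    evalMatrix q a i ≠ c • 1 := by
  have hs' : q⁻¹ - q ≠ 0 := by rwa [← neg_sub, neg_ne_zero]
  intro h
  have h01 := congrFun₂ h 0 1
  have h10 := congrFun₂ h 1 0
  fin_cases i <;> simp_all [evalMatrix]

namespace IsEvalRep

theorem type1Diam (hs : q - q⁻¹ ≠ 0) (ha : a ≠ 0) (hπ : IsEvalRep a π) : Type1Diam F q π 1 := by
  have hq0 : q ≠ 0 := by rintro rfl; simp at hs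
  have hscalar : ∀ (i : ZMod 4) (c : F), π (bx F q i) ≠ c • 1 := by
    intro i c h
    refine evalMatrix_ne_smul_one hs ha i c (Matrix.toLin'.injective ?_)
    rw [← hπ i, h, map_smul, Matrix.toLin'_one]
    rfl
  refine (type1Diam_one_iff hs).2 fun i => ⟨?_, hscalar i q, hscalar i q⁻¹⟩
  rw [hπ i, Module.End.mul_eq_comp, ← Matrix.toLin'_mul, evalMatrix_mul_self hq0, map_sub, map_smul,
    Matrix.toLin'_one]
  rfl

theorem bx_one_sub_apply (hπ : IsEvalRep a π) (v : Fin 2 → F) :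
    π (bx F q 1) v - q⁻¹ • v = ((q - q⁻¹) * (v 0 - v 1)) • ![1, 0] := by
  simp only [hπ 1, evalMatrix, toLin'_fin_two_apply, funext_iff, Fin.forall_fin_two, Pi.sub_apply,
    Pi.smul_apply, smul_eq_mul, Matrix.cons_val]
  constructor <;> ring

theorem bx_zero_sub_apply (hπ : IsEvalRep a π) (v : Fin 2 → F) :
    π (bx F q 0) v - q • v = ((q - q⁻¹) * (a⁻¹ * v 1 - v 0)) • ![1, 0] := by
  simp only [hπ 0, evalMatrix, toLin'_fin_two_apply, funext_iff, Fin.forall_fin_two, Pi.sub_apply,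
    Pi.smul_apply, smul_eq_mul, Matrix.cons_val]
  constructor <;> ring

theorem bx_two_sub_apply (hπ : IsEvalRep a π) :
    π (bx F q 2) ![1, 0] - q • ![1, 0] = (q - q⁻¹) • ![0, 1] := by
  simp only [hπ 2, evalMatrix, toLin'_fin_two_apply, funext_iff, Fin.forall_fin_two, Pi.sub_apply,
    Pi.smul_apply, smul_eq_mul, Matrix.cons_val]
  constructor <;> ring

theorem isIrrep (hs : q - q⁻¹ ≠ 0) (ha1 : a ≠ 1) (hπ : IsEvalRep a π) : IsIrrep F π := by
  refine ⟨inferInstance, fun W hW => or_iff_not_imp_left.2 fun hW0 => ?_⟩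
  obtain ⟨v, hv, hv0⟩ := (Submodule.ne_bot_iff _).1 hW0
  have he0 : ![1, 0] ∈ W := by
    by_cases h1 : v 0 - v 1 = 0
    · have h0 : a⁻¹ * v 1 - v 0 ≠ 0 := by
        intro h0
        have hv1 : v 1 ≠ 0 := fun h => hv0 (by ext j; fin_cases j <;> simp_all)
        rw [sub_eq_zero.1 h1, sub_eq_zero, mul_eq_right₀ hv1, inv_eq_one] at h0
        exact ha1 h0
      rw [← W.smul_mem_iff (mul_ne_zero hs h0), ← hπ.bx_zero_sub_apply]
      exact sub_mem (hW _ _ hv) (W.smul_mem q hv)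
    · rw [← W.smul_mem_iff (mul_ne_zero hs h1), ← hπ.bx_one_sub_apply]
      exact sub_mem (hW _ _ hv) (W.smul_mem q⁻¹ hv)
  have he1 : ![0, 1] ∈ W := by
    rw [← W.smul_mem_iff hs, ← hπ.bx_two_sub_apply]
    exact sub_mem (hW _ _ he0) (W.smul_mem q he0)
  refine Submodule.eq_top_iff'.2 fun w => ?_
  have hw : w = w 0 • ![1, 0] + w 1 • ![0, 1] := by
    ext j
    fin_cases j <;> simp
  rw [hw]
  exact add_mem (W.smul_mem _ he0) (W.smul_mem _ he1)

theorem map_sub_sq_eq (hπ : IsEvalRep a π) :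
    π ((bx F q 0 - bx F q 2) ^ 2) = ((q - q⁻¹) ^ 2 * (1 - a⁻¹)) • 1 := by
  have hdiff : evalMatrix q a 0 - evalMatrix q a 2 =
      !![q⁻¹ - q, (q - q⁻¹) * a⁻¹; q⁻¹ - q, q - q⁻¹] := by
    ext j k
    fin_cases j <;> fin_cases k <;> simp [evalMatrix]
  have hmat : (evalMatrix q a 0 - evalMatrix q a 2) ^ 2 = ((q - q⁻¹) ^ 2 * (1 - a⁻¹)) • 1 := by
    simp only [hdiff, sq, Matrix.mul_fin_two, Matrix.one_fin_two, ← Matrix.ext_iff,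
      Fin.forall_fin_two, Matrix.smul_apply, smul_eq_mul, Matrix.of_apply, Matrix.cons_val]
    grind
  rw [map_pow, map_sub, hπ 0, hπ 2, ← map_sub, ← Matrix.toLin'_pow, hmat, map_smul,
    Matrix.toLin'_one]
  rfl

theorem eq_of_repIso {V : Type} [AddCommGroup V] [Module F V] [Nontrivial V]
    {π' : BoxQ F q →ₐ[F] Module.End F (Fin 2 → F)} {ρ : BoxQ F q →ₐ[F] Module.End F V}
    (hs : q - q⁻¹ ≠ 0) (hπ : IsEvalRep a π) (hπ' : IsEvalRep b π') (h : RepIso F π ρ)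
    (h' : RepIso F π' ρ) : a = b := by
  have hC := (h.map_eq_smul_one hπ.map_sub_sq_eq).symm.trans (h'.map_eq_smul_one hπ'.map_sub_sq_eq)
  have hab := mul_left_cancel₀ (pow_ne_zero 2 hs) (smul_left_injective F one_ne_zero hC)
  exact inv_injective (sub_right_injective hab)

end IsEvalRep

end EvaluationModules

section Classification

variable {F} {q a : F} {V : Type} [AddCommGroup V] [Module F V] {π : BoxQ F q →ₐ[F] Module.End F V}

/-- A pair of vectors on which `□_q` acts as on the standard basis of `V(1,a)`, expressed through
the subspaces `U_i`: for four lines `U_i` in a plane, `a` is a cross-ratio. -/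
structure IsEvalFrame (π : BoxQ F q →ₐ[F] Module.End F V) (a : F) (u z : V) : Prop where
  mem_zero : u ∈ corner π 0
  mem_one : u + z ∈ corner π 1
  mem_two : z ∈ corner π 2
  mem_three : u + a • z ∈ corner π 3

theorem apply_eq_of_apply_add_eq {f : Module.End F V} {α β : F} {v w : V} (hv : f v = α • v)
    (hvw : f (v + w) = β • (v + w)) : f w = (β - α) • v + β • w := by
  rw [map_add, hv] at hvw
  linear_combination (norm := module) hvw

theorem IsEvalFrame.intertwines (hq0 : q ≠ 0) (hq4 : q ^ 4 ≠ 1) (ha : a ≠ 0)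
    (hπ : Type1Diam F q π 1) {u z : V} (h : IsEvalFrame π a u z)
    {π' : BoxQ F q →ₐ[F] Module.End F (Fin 2 → F)} (hπ' : IsEvalRep a π') (r : BoxQ F q)
    (v : Fin 2 → F) : Fintype.linearCombination F ![u, z] (π' r v) =
      π r (Fintype.linearCombination F ![u, z] v) := by
  have hmem {i : ZMod 4} {w : V} (hw : w ∈ corner π i) : π (bx F q (i + 1)) w = q • w :=
    (hπ.mem_corner_iff_add_one hq0 hq4).1 hw
  have hu0 := mem_corner_iff.1 h.mem_zero
  have hu1 : π (bx F q 1) u = q • u := hmem h.mem_zero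
  have hz2 := mem_corner_iff.1 h.mem_two
  have hz3 : π (bx F q 3) z = q • z := hmem h.mem_two
  have hz0 : π (bx F q 0) z = ((q - q⁻¹) * a⁻¹) • u + q • z := by
    have haz := apply_eq_of_apply_add_eq hu0 (hmem h.mem_three)
    rw [map_smul, ← eq_inv_smul_iff₀ ha, smul_add, smul_comm q a, inv_smul_smul₀ ha] at haz
    rw [haz, smul_smul, mul_comm]
  have hz1 : π (bx F q 1) z = (q⁻¹ - q) • u + q⁻¹ • z :=
    apply_eq_of_apply_add_eq hu1 (mem_corner_iff.1 h.mem_one)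
  have hu2 : π (bx F q 2) u = (q - q⁻¹) • z + q • u :=
    apply_eq_of_apply_add_eq hz2 (add_comm u z ▸ hmem h.mem_one)
  have hu3 : π (bx F q 3) u = (q⁻¹ - q) • a • z + q⁻¹ • u := by
    refine apply_eq_of_apply_add_eq ?_ (add_comm u (a • z) ▸ mem_corner_iff.1 h.mem_three)
    rw [map_smul, hz3, smul_comm]
  refine intertwines_of_bx (fun i v => ?_) r v
  rw [hπ' i]
  simp only [Fintype.linearCombination_apply, Fin.sum_univ_two, map_add, map_smul]
  obtain rfl | rfl | rfl | rfl : i = 0 ∨ i = 1 ∨ i = 2 ∨ i = 3 := by revert i; decide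
  all_goals
    simp only [evalMatrix, toLin'_fin_two_apply, Matrix.cons_val, smul_add, hu0, hu1, hu2, hu3,
      hz0, hz1, hz2, hz3]
    module

namespace Type1Diam

variable (hq0 : q ≠ 0) (hq4 : q ^ 4 ≠ 1) (hπ : Type1Diam F q π 1)
include hq0 hq4 hπ

theorem exists_mem_corners [IsAlgClosed F] [FiniteDimensional F V] (hirr : IsIrrep F π) :
    ∃ (b : F) (u z : V), u ≠ 0 ∧ u ∈ corner π 0 ∧ u + z ∈ corner π 1 ∧ z ∈ corner π 2 ∧
      b • u + z ∈ corner π 3 := by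
  have hs := sub_inv_ne_zero_of_even_of_pow_ne_one hq0 (by decide) hq4
  obtain ⟨c, hc⟩ := hirr.exists_eq_smul_one_of_commute (hπ.commute_sub_sq hq0 hq4)
  obtain ⟨u, hu, hu0⟩ := (Submodule.ne_bot_iff _).1 (hπ.corner_ne_bot hq0 hq4 0)
  obtain ⟨z, hz⟩ : ∃ z, (q - q⁻¹) • z = π (bx F q 2) u - q • u :=
    ⟨_, smul_inv_smul₀ hs _⟩
  have hz2 : z ∈ corner π 2 := by
    rw [← Submodule.smul_mem_iff _ hs, hz]
    exact hπ.sub_smul_mem_corner hq0 hq4 2 u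
  obtain ⟨b, rfl⟩ : ∃ b, c = (q - q⁻¹) ^ 2 * (1 - b) :=
    ⟨1 - c / (q - q⁻¹) ^ 2, by rw [sub_sub_cancel, mul_div_cancel₀ _ (pow_ne_zero 2 hs)]⟩
  refine ⟨b, u, z, hu0, hu, ?_, hz2, ?_⟩
  · have huz : (q - q⁻¹) • (u + z) = π (bx F q 2) u - q⁻¹ • u := by
      rw [smul_add, hz]
      module
    rw [← Submodule.smul_mem_iff _ hs, huz]
    exact hπ.sub_inv_smul_mem_corner hq0 hq4 1 u
  · have hdiff : (π (bx F q 0) - π (bx F q 2)) u = -(q - q⁻¹) • (u + z) := by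
      rw [LinearMap.sub_apply, mem_corner_iff.1 hu, neg_smul, smul_add, hz]
      module
    have hsq : (π (bx F q 0) - π (bx F q 2)) ((π (bx F q 0) - π (bx F q 2)) u) =
        ((q - q⁻¹) ^ 2 * (1 - b)) • u := by
      rw [← Module.End.mul_apply, ← sq, hc]
      rfl
    rw [hdiff, map_smul, map_add, hdiff, LinearMap.sub_apply, mem_corner_iff.1 hz2] at hsq
    have hbuz : (q - q⁻¹) • (b • u + z) = π (bx F q 0) z - q⁻¹ • z := by
      refine smul_right_injective V hs ?_
      linear_combination (norm := module) hsq
    rw [← Submodule.smul_mem_iff _ hs, hbuz]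
    exact hπ.sub_inv_smul_mem_corner hq0 hq4 3 z

theorem exists_isEvalFrame [IsAlgClosed F] [FiniteDimensional F V] (hirr : IsIrrep F π) :
    ∃ a : F, (a ≠ 0 ∧ a ≠ 1) ∧ ∃ u z : V, u ≠ 0 ∧ IsEvalFrame π a u z := by
  obtain ⟨b, u, z, hu0, hu, huz, hz, hbuz⟩ := hπ.exists_mem_corners hq0 hq4 hirr
  have hb0 : b ≠ 0 := by
    rintro rfl
    rw [zero_smul, zero_add] at hbuz
    have hz0 : z = 0 :=
      Submodule.disjoint_def.1 (hπ.disjoint_corner_add_one hq0 hq4 2) z hz hbuz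
    rw [hz0, add_zero] at huz
    exact hu0 (Submodule.disjoint_def.1 (hπ.disjoint_corner_add_one hq0 hq4 0) u hu huz)
  have hb1 : b ≠ 1 := by
    rintro rfl
    rw [one_smul] at hbuz
    have huz0 : u + z = 0 :=
      Submodule.disjoint_def.1 (hπ.disjoint_corner_add_two hq0 hq4 hirr 1) _ huz hbuz
    have hu2 : u ∈ corner π 2 := by
      rw [eq_neg_of_add_eq_zero_left huz0]
      exact neg_mem hz
    exact hu0 (Submodule.disjoint_def.1 (hπ.disjoint_corner_add_two hq0 hq4 hirr 0) u hu hu2)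
  refine ⟨b⁻¹, ⟨inv_ne_zero hb0, inv_ne_one.2 hb1⟩, u, z, hu0, hu, huz, hz, ?_⟩
  rw [← Submodule.smul_mem_iff _ hb0, smul_add, smul_inv_smul₀ hb0]
  exact hbuz

theorem exists_repIso_isEvalRep [IsAlgClosed F] [FiniteDimensional F V] (hirr : IsIrrep F π) :
    ∃ a : F, (a ≠ 0 ∧ a ≠ 1) ∧ ∃ π' : BoxQ F q →ₐ[F] Module.End F (Fin 2 → F),
      IsEvalRep a π' ∧ RepIso F π' π := by
  have hs := sub_inv_ne_zero_of_even_of_pow_ne_one hq0 (by decide) hq4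
  obtain ⟨a, ⟨ha0, ha1⟩, u, z, hu0, hframe⟩ := hπ.exists_isEvalFrame hq0 hq4 hirr
  obtain ⟨π', hπ'⟩ := exists_isEvalRep hs ha0
  refine ⟨a, ⟨ha0, ha1⟩, π', hπ', (hπ'.isIrrep hs ha1).repIso_of_ne_zero hirr
    (hframe.intertwines hq0 hq4 ha0 hπ hπ') fun h => hu0 ?_⟩
  simpa using LinearMap.congr_fun h (Pi.single 0 1)

end Type1Diam

end Classification

theorem stmt13_general [IsAlgClosed F] (q : F) (hq0 : q ≠ 0) (hq4 : q ^ 4 ≠ 1) :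
    (∀ a : F, a ≠ 0 → a ≠ 1 →
      ∃ π : BoxQ F q →ₐ[F] Module.End F (Fin 2 → F),
        π (bx F q 0) = Matrix.toLin' !![q⁻¹, (q - q⁻¹) * a⁻¹; 0, q] ∧
        π (bx F q 1) = Matrix.toLin' !![q, q⁻¹ - q; 0, q⁻¹] ∧
        π (bx F q 2) = Matrix.toLin' !![q, 0; q - q⁻¹, q⁻¹] ∧
        π (bx F q 3) = Matrix.toLin' !![q⁻¹, 0; (q⁻¹ - q) * a, q] ∧
        IsIrrep F π ∧ Type1Diam F q π 1) ∧
    (∀ (V : Type) [AddCommGroup V] [Module F V] [FiniteDimensional F V]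
        (π : BoxQ F q →ₐ[F] Module.End F V),
        IsIrrep F π → Type1Diam F q π 1 →
        ∃! a : F, (a ≠ 0 ∧ a ≠ 1) ∧
          ∃ π' : BoxQ F q →ₐ[F] Module.End F (Fin 2 → F),
            π' (bx F q 0) = Matrix.toLin' !![q⁻¹, (q - q⁻¹) * a⁻¹; 0, q] ∧
            π' (bx F q 1) = Matrix.toLin' !![q, q⁻¹ - q; 0, q⁻¹] ∧
            π' (bx F q 2) = Matrix.toLin' !![q, 0; q - q⁻¹, q⁻¹] ∧
            π' (bx F q 3) = Matrix.toLin' !![q⁻¹, 0; (q⁻¹ - q) * a, q] ∧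
            RepIso F π' π) := by
  have hs := sub_inv_ne_zero_of_even_of_pow_ne_one hq0 (by decide) hq4
  refine ⟨fun a ha0 ha1 => ?_, fun V _ _ _ π hirr hπ => ?_⟩
  · obtain ⟨π, hπ⟩ := exists_isEvalRep hs ha0
    exact ⟨π, hπ 0, hπ 1, hπ 2, hπ 3, hπ.isIrrep hs ha1, hπ.type1Diam hs ha0⟩
  · have := hirr.1
    obtain ⟨a, ha, π', hπ', hiso⟩ := hπ.exists_repIso_isEvalRep hq0 hq4 hirr
    refine ⟨a, ⟨ha, π', hπ' 0, hπ' 1, hπ' 2, hπ' 3, hiso⟩, ?_⟩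
    rintro b ⟨-, ρ, h0, h1, h2, h3, hiso'⟩
    exact IsEvalRep.eq_of_repIso hs (isEvalRep_iff.2 ⟨h0, h1, h2, h3⟩) hπ' hiso' hiso

/-- The evaluation modules `V(1,a)` for `a ∈ F \ {0,1}`: explicit irreducible type-1
diameter-1 `□_q`-modules on `F²`, and every finite-dimensional irreducible `□_q`-module
of type 1 and diameter 1 is isomorphic to `V(1,a)` for exactly one such `a`. -/
theorem stmt13 [IsAlgClosed F] [CharZero F] (q : F) (hq0 : q ≠ 0)
    (hq1 : ∀ n : ℕ, 0 < n → q ^ n ≠ 1) :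
    (∀ a : F, a ≠ 0 → a ≠ 1 →
      ∃ π : BoxQ F q →ₐ[F] Module.End F (Fin 2 → F),
        π (bx F q 0) = Matrix.toLin' !![q⁻¹, (q - q⁻¹) * a⁻¹; 0, q] ∧
        π (bx F q 1) = Matrix.toLin' !![q, q⁻¹ - q; 0, q⁻¹] ∧
        π (bx F q 2) = Matrix.toLin' !![q, 0; q - q⁻¹, q⁻¹] ∧
        π (bx F q 3) = Matrix.toLin' !![q⁻¹, 0; (q⁻¹ - q) * a, q] ∧
        IsIrrep F π ∧ Type1Diam F q π 1) ∧
    (∀ (V : Type) [AddCommGroup V] [Module F V] [FiniteDimensional F V]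
        (π : BoxQ F q →ₐ[F] Module.End F V),
        IsIrrep F π → Type1Diam F q π 1 →
        ∃! a : F, (a ≠ 0 ∧ a ≠ 1) ∧
          ∃ π' : BoxQ F q →ₐ[F] Module.End F (Fin 2 → F),
            π' (bx F q 0) = Matrix.toLin' !![q⁻¹, (q - q⁻¹) * a⁻¹; 0, q] ∧
            π' (bx F q 1) = Matrix.toLin' !![q, q⁻¹ - q; 0, q⁻¹] ∧
            π' (bx F q 2) = Matrix.toLin' !![q, 0; q - q⁻¹, q⁻¹] ∧
            π' (bx F q 3) = Matrix.toLin' !![q⁻¹, 0; (q⁻¹ - q) * a, q] ∧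
            RepIso F π' π) :=
  stmt13_general F q hq0 (hq1 4 (by norm_num))
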